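/- arXiv:0709.0207 — 2 statements merged into one kernel-verified Lean document; each statement's English description precedes it below -/
import Mathlib

section
/- Let (W,S) be the Coxeter system of type B₃ with S = {s,t,u}, where st has order 3, tu has order 4 and su has order 2. Then f_W is not defined at the element stsuts (and this is the only element at which f_W is undefined), and the elements x at which f_W is defined but x is not separated are exactly the following 20 elements: utu, tut, utsu, tuts, utsut, tsuts, sutu, tsutu, utsutu, (tsu)², tutsutu, stut, stsut, (sut)², sutsutu, tsutsut, tsutsutu, stuts, stutsutu, stsutsut. -/
noncomputable section

open scoped Classical

namespace KLPaper

variable {W : Type*} [Group W]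

/-- The word length of `w` with respect to the generating set `S`:
the minimal length of an expression of `w` as a product of elements of `S`. -/
def wordLength (S : Set W) (w : W) : ℕ :=
  sInf {k | ∃ l : List W, l.length = k ∧ (∀ x ∈ l, x ∈ S) ∧ l.prod = w}

/-- A reflection: a conjugate of a simple reflection. -/
def IsReflection (S : Set W) (t : W) : Prop :=
  ∃ w : W, ∃ s ∈ S, t = w * s * w⁻¹

/-- One step in the Bruhat order. -/
def bruhatStep (S : Set W) (a b : W) : Prop :=
  ∃ t, IsReflection S t ∧ b = a * t ∧ wordLength S a < wordLength S b

/-- The strict Bruhat order on `(W, S)`. -/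
def bruhatLT (S : Set W) : W → W → Prop := Relation.TransGen (bruhatStep S)

/-- The Bruhat order on `(W, S)`. -/
def bruhatLE (S : Set W) : W → W → Prop := Relation.ReflTransGen (bruhatStep S)

/-- The underlying module of the Hecke algebra: the free `ℤ[v,v⁻¹]`-module on `W`. -/
abbrev HMod (W : Type*) := W →₀ LaurentPolynomial ℤ

/-- The standard basis element `H_w` of the Hecke algebra. -/
def std (w : W) : HMod W := Finsupp.single w 1

/-- All of the data of the Hecke algebra of `(W, S)` together with its
Kazhdan-Lusztig basis:  the (unique) multiplication making the free module
`HMod W` into an associative `ℤ[v,v⁻¹]`-algebra with the defining relations of the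
Hecke algebra, the bar involution, and the (unique) Kazhdan-Lusztig basis `klb`. -/
structure KLData (S : Set W) where
  /-- The Hecke algebra multiplication. -/
  mul : HMod W → HMod W → HMod W
  mul_add_left : ∀ a b c : HMod W, mul (a + b) c = mul a c + mul b c
  mul_add_right : ∀ a b c : HMod W, mul a (b + c) = mul a b + mul a c
  mul_smul_left : ∀ (r : LaurentPolynomial ℤ) (a b : HMod W), mul (r • a) b = r • mul a b
  mul_smul_right : ∀ (r : LaurentPolynomial ℤ) (a b : HMod W), mul a (r • b) = r • mul a b
  mul_assoc : ∀ a b c : HMod W, mul (mul a b) c = mul a (mul b c)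
  one_mul : ∀ a : HMod W, mul (std 1) a = a
  mul_one : ∀ a : HMod W, mul a (std 1) = a
  /-- `H_s H_w = H_{sw}` if `sw > w`. -/
  mul_gen_of_lt : ∀ s ∈ S, ∀ w : W, bruhatLT S w (s * w) →
    mul (std s) (std w) = std (s * w)
  /-- `H_s H_w = (v - v⁻¹) H_w + H_{sw}` if `sw < w`. -/
  mul_gen_of_gt : ∀ s ∈ S, ∀ w : W, bruhatLT S (s * w) w →
    mul (std s) (std w) =
      ((LaurentPolynomial.T 1 : LaurentPolynomial ℤ) - LaurentPolynomial.T (-1)) • std w + std (s * w)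
  /-- The inverse of the standard basis element `H_w`. -/
  sinv : W → HMod W
  mul_sinv : ∀ w : W, mul (std w) (sinv w) = std 1
  sinv_mul : ∀ w : W, mul (sinv w) (std w) = std 1
  /-- The bar involution of the Hecke algebra. -/
  bar : HMod W → HMod W
  bar_add : ∀ a b : HMod W, bar (a + b) = bar a + bar b
  bar_smul : ∀ (r : LaurentPolynomial ℤ) (a : HMod W),
    bar (r • a) = (LaurentPolynomial.invert (R := ℤ) r) • bar a
  bar_mul : ∀ a b : HMod W, bar (mul a b) = mul (bar a) (bar b)
  /-- The bar involution sends `H_w` to `(H_{w⁻¹})⁻¹`. -/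
  bar_std : ∀ w : W, bar (std w) = sinv w⁻¹
  /-- The Kazhdan-Lusztig basis element `h_w`. -/
  klb : W → HMod W
  klb_bar : ∀ w : W, bar (klb w) = klb w
  klb_supp : ∀ w x : W, (klb w) x ≠ 0 → bruhatLE S x w
  klb_diag : ∀ w : W, (klb w) w = 1
  klb_lower : ∀ w x : W, x ≠ w → (klb w) x ∈
    Submodule.span ℤ ((fun n : ℤ => (LaurentPolynomial.T n : LaurentPolynomial ℤ)) ''
      {n : ℤ | n < 0})
  /-- The Kazhdan-Lusztig basis elements form a basis: unique expansion. -/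
  klb_basis : ∀ h : HMod W, ∃! c : W →₀ LaurentPolynomial ℤ,
    h = c.sum fun x a => a • klb x

variable {S : Set W}

/-- The KL-support of an element of the Hecke algebra: the set of `x` such that the
coefficient of `h_x` in the (unique) expansion in the Kazhdan-Lusztig basis is nonzero. -/
def suppKL (K : KLData S) (h : HMod W) : Set W :=
  {x | ∀ c : W →₀ LaurentPolynomial ℤ, h = (c.sum fun y a => a • K.klb y) → c x ≠ 0}

/-- `ˢZ = {x ∈ Z | sx > x}`. -/
def upLeft (S : Set W) (s : W) (Z : Set W) : Set W := {x ∈ Z | bruhatLT S x (s * x)}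

/-- `Zˢ = {x ∈ Z | xs > x}`. -/
def upRight (S : Set W) (t : W) (Z : Set W) : Set W := {x ∈ Z | bruhatLT S x (x * t)}

/-- Fuel-based auxiliary definition of the partial function `f_W`, computed by
induction on the Bruhat order (the fuel is the length). -/
def fAux (K : KLData S) : ℕ → W → Option (Set W)
  | 0, x => if x = 1 then some {(1 : W)} else none
  | n + 1, x =>
    if x = 1 then some {(1 : W)} else
    if (∃ s ∈ S, bruhatLT S (s * x) x ∧
          ∃ G : Set W, fAux K n (s * x) = some G ∧ upLeft S s G = G) ∨
       (∃ t ∈ S, bruhatLT S (x * t) x ∧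
          ∃ G : Set W, fAux K n (x * t) = some G ∧ upRight S t G = G) then
      some
        ((⋂ s ∈ S, ⋂ G ∈ {G : Set W | bruhatLT S (s * x) x ∧
              fAux K n (s * x) = some G ∧ upLeft S s G = G},
            ⋃ w ∈ G, suppKL K (K.mul (K.klb s) (K.klb w))) ∩
         (⋂ t ∈ S, ⋂ G ∈ {G : Set W | bruhatLT S (x * t) x ∧
              fAux K n (x * t) = some G ∧ upRight S t G = G},
            ⋃ w ∈ G, suppKL K (K.mul (K.klb w) (K.klb t))))
    else none

/-- The partial function `f_W` from `W` to subsets of `W`; the value `none` means that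
`f_W` is not defined at the given element. -/
def fW (K : KLData S) (x : W) : Option (Set W) := fAux K (wordLength S x) x

/-- `x` is separated if `f_W` is defined at `x` with value `{x}`. -/
def Separated (K : KLData S) (x : W) : Prop := fW K x = some {x}

/-- The set `σ(W)` of separated elements. -/
def sigma' (K : KLData S) : Set W := {x | Separated K x}

end KLPaper

/-! ## Combinatorial data for type B₃

The 48 elements are numbered in the order of their ShortLex normal forms. -/

namespace B3

/-- ShortLex normal forms. -/
def words : List (List (Fin 3)) :=
    [[], [0], [1], [2], [0, 1], [0, 2], [1, 0], [1, 2], [2, 1], [0, 1, 0], [0, 1, 2], [0, 2, 1],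
    [1, 0, 2], [1, 2, 1], [2, 1, 0], [2, 1, 2], [0, 1, 0, 2], [0, 1, 2, 1], [0, 2, 1, 0], [0, 2,
    1, 2], [1, 0, 2, 1], [1, 2, 1, 0], [1, 2, 1, 2], [2, 1, 0, 2], [0, 1, 0, 2, 1], [0, 1, 2, 1,
    0], [0, 1, 2, 1, 2], [0, 2, 1, 0, 2], [1, 0, 2, 1, 0], [1, 0, 2, 1, 2], [1, 2, 1, 0, 2], [2,
    1, 0, 2, 1], [0, 1, 0, 2, 1, 0], [0, 1, 0, 2, 1, 2], [0, 1, 2, 1, 0, 2], [0, 2, 1, 0, 2, 1],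
    [1, 0, 2, 1, 0, 2], [1, 2, 1, 0, 2, 1], [2, 1, 0, 2, 1, 2], [0, 1, 0, 2, 1, 0, 2], [0, 1, 2,
    1, 0, 2, 1], [0, 2, 1, 0, 2, 1, 2], [1, 0, 2, 1, 0, 2, 1], [1, 2, 1, 0, 2, 1, 2], [0, 1, 0,
    2, 1, 0, 2, 1], [0, 1, 2, 1, 0, 2, 1, 2], [1, 0, 2, 1, 0, 2, 1, 2], [0, 1, 0, 2, 1, 0, 2, 1,
    2]]

/-- Normal form of the `i`-th element. -/
def wd (i : Fin 48) : List (Fin 3) := words.getD i.val []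

/-- Lengths, packed with 4 bits per element. -/
def len (i : Fin 48) : ℕ :=
  (3740100065263720757070350451589428318103331482387062329616 >>> (4 * i.val)) % 16

/-- Packed tables (6 bits per element) of right multiplication by the generators. -/
def raT (j : Fin 3) : ℕ :=
  match j with
  | 0 => 363236711602160438008650178801496201448112433058244951557442742219883484215250791981057
  | 1 => 354991666354074739781782963338941467335102541585964203784700492718796579337839585526018
  | 2 => 347086527062010732534886829007282100058476208779070641635638740786075655964180640461123

/-- Packed tables (6 bits per element) of left multiplication by the generators. -/
def laT (j : Fin 3) : ℕ :=
  match j with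
  | 0 => 363240509118731133259640291190850284092739604364455536809602474204830355885047722295297
  | 1 => 354748858673659526195277239558085643808397327880817883186765474270158863044897733869954
  | 2 => 347084629461003543889486132725742790328989909209599522841498975027478879072927451480387

/-- Right multiplication by the `j`-th generator. -/
def ra (j : Fin 3) (i : Fin 48) : Fin 48 := Fin.ofNat 48 ((raT j >>> (6 * i.val)) % 64)

/-- Left multiplication by the `j`-th generator. -/
def la (j : Fin 3) (i : Fin 48) : Fin 48 := Fin.ofNat 48 ((laT j >>> (6 * i.val)) % 64)

/-- The `y < w` with nonzero (hence equal to one) Kazhdan-Lusztig `μ`-coefficient. -/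
def muT : List (List (Fin 48)) :=
    [[], [0], [0], [0], [1, 2], [1, 3], [1, 2], [2, 3], [2, 3], [4, 6], [4, 5, 7], [4, 5, 8], [5,
    6, 7], [7, 8], [5, 6, 8], [7, 8], [9, 10, 12], [10, 11, 13], [9, 11, 14], [10, 11, 15], [2,
    9, 11, 12, 13], [12, 13, 14], [13, 15], [12, 14, 15], [16, 17, 20], [5, 16, 17, 18, 21], [17,
    19, 22], [5, 16, 18, 19, 23], [18, 20, 21], [7, 16, 19, 20, 22], [21, 22, 23], [8, 18, 20,
    22, 23], [24, 25, 28], [24, 26, 29], [25, 26, 27, 30], [11, 24, 26, 27, 31], [12, 27, 28, 29,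
    30], [28, 30, 31], [3, 27, 29, 31], [16, 32, 33, 34, 36], [18, 32, 34, 35, 37], [33, 35, 38],
    [20, 22, 33, 35, 36, 37], [36, 37, 38], [9, 39, 40, 42], [27, 39, 40, 41, 43], [41, 42, 43],
    [44, 45, 46]]

/-- The `y < w` with nonzero `μ`-coefficient. -/
def mu (w : Fin 48) : List (Fin 48) := muT.getD w.val []

/-- Is the coefficient of `q ^ k` in the Kazhdan-Lusztig polynomial of `(x, w)` nonzero?
(It is then equal to one.) -/
def bit (k : Fin 3) (w x : Fin 48) : Bool :=
  Nat.testBit (match k with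
  | 0 =>
      3742053650892124213523919752098799652960643292910916861324184167621543964319406263826340646130738073910213418227439834676023818019779101187496169388176052021472939417539775210264389417398641527442488376493103102300434675042812719288147668470051805566637517241520690888812067841096017523947704992648137786873911869954094248470746880921811320514653264509732331881661534601129244752956981002293509013275806946773749037826171071173159941224106679379123537752780349608472782863853740065902467739730601320167688914645935095268413596664146698404916420100898265049417748008398960218948658250794575452527430389156065470904855622286860570540016325748512107313865315433353076781714534633514908514691055617
  | 1 =>
      24081852244645258453240481432153984652905997689285004273905057995513348249236984447482782636794435120782238133085540602779674903807435199013167546709943738821592622178818450751834865225043999135779581760564176500900176398996165784049745942092508109875194068763047144529582522989391259635382903160166768410360096186137256200081420658966676554272125813457710377151977414945585256292562124733601535390356980605530076196549515046341220108218390283194767989569746005825539156507083988012649791075622591696449594901955704668517722306693124821663209077518621514211987431272816851694207166292520278306691884257143084741394874384212774778318487999804147639700793851904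
  | 2 =>
      357089980595369161964635147596424168378855628102307346091339073376530609399708176694765080149174098954131798173811642305537878522605535058845151268498503026031142134605020755795466048519163292248685650645560722924348230358472321941371731547432352392213180365288428712419019472171118265717206726381185684736527796499087637624619254908945302227104973121111256467558870835299264063695441931709027375738013030672903005556354161895002661236582276154380897369355237546894566230728864901782828176399882876518120641675620718699026281402240511514251544378290824636403572078637067907173221758726612138914328091170309567528328289731727750829994672128) (48 * w.val + x.val)

/-- Kazhdan-Lusztig polynomial of `(x, w)`, as a list of coefficients. -/
def pol (w x : Fin 48) : List ℕ :=
  if bit 2 w x then [(bit 0 w x).toNat, (bit 1 w x).toNat, 1]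
  else if bit 1 w x then [(bit 0 w x).toNat, 1]
  else if bit 0 w x then [1] else []

/-- The table of the partial function `f_W`. -/
def FT : List (Option (List (Fin 48))) :=
    [some [0], some [1], some [2], some [3], some [4], some [5], some [6], some [7], some [8],
    some [9], some [10], some [11], some [12], some [2, 13], some [14], some [3, 15], some [16],
    some [4, 17], some [18], some [5, 19], some [20], some [6, 21], some [22], some [5, 23], some
    [9, 24], some [1, 9, 25], some [26], some [27], some [9, 28], some [12, 29], some [30], some
    [11, 31], none, some [33], some [34], some [18, 35], some [16, 36], some [37], some [5, 19,
    22, 23, 38], some [39], some [40], some [26, 41], some [9, 24, 28, 42], some [30, 43], some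
    [32, 44], some [34, 45], some [22, 46], some [47]]

/-- The partial function `f_W` on indices. -/
def F (i : Fin 48) : Option (List (Fin 48)) := FT.getD i.val none

/-- Addition of coefficient lists. -/
def addL : List ℕ → List ℕ → List ℕ
  | [], l => l
  | l, [] => l
  | a :: l, b :: m => (a + b) :: addL l m

/-- Multiplication by `q ^ k`. -/
def shL : ℕ → List ℕ → List ℕ
  | 0, l => l
  | k + 1, l => 0 :: shL k l

/-- Is a coefficient list zero? -/
def zeroL : List ℕ → Bool
  | [] => true
  | a :: l => Nat.beq a 0 && zeroL l

/-- Equality of coefficient lists up to trailing zeros. -/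
def eqL : List ℕ → List ℕ → Bool
  | [], m => zeroL m
  | a :: l, m =>
    match m with
    | [] => Nat.beq a 0 && zeroL l
    | b :: m => Nat.beq a b && eqL l m

/-- KL-support of `h_s h_w` (for `sw > w`). -/
def LS (j : Fin 3) (w : Fin 48) : List (Fin 48) :=
  la j w :: (mu w).filter (fun y => Nat.blt (len (la j y)) (len y))

/-- KL-support of `h_w h_s` (for `ws > w`). -/
def RS (j : Fin 3) (w : Fin 48) : List (Fin 48) :=
  ra j w :: (mu w).filter (fun y => Nat.blt (len (ra j y)) (len y))

/-- Sum of shifted polynomials. -/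
def sumL (w x : Fin 48) : List (Fin 48) → List ℕ
  | [] => []
  | y :: l => addL (shL ((len w + 1 - len y) / 2) (pol y x)) (sumL w x l)

/-- The identity `h_s h_w = ∑ h_y`, at the coefficient of `H_x`. -/
def chk (w x x' : Fin 48) (l : List (Fin 48)) : Bool :=
  eqL (bif Nat.blt (len x') (len x) then addL (pol w x') (0 :: pol w x)
    else addL (0 :: pol w x') (pol w x)) (sumL w x l)

theorem chkL : ∀ (j : Fin 3) (w : Fin 48), Nat.blt (len w) (len (la j w)) = true →
    ∀ x : Fin 48, chk w x (la j x) (LS j w) = true := by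
  decide +kernel

theorem chkR : ∀ (j : Fin 3) (w : Fin 48), Nat.blt (len w) (len (ra j w)) = true →
    ∀ x : Fin 48, chk w x (ra j x) (RS j w) = true := by
  decide +kernel

theorem LS_len : ∀ (j : Fin 3) (w : Fin 48), ∀ y ∈ LS j w, len w < len (la j w) →
    len y ≤ len w + 1 ∧ (len w + 1 - len y) % 2 = 0 := by
  decide +kernel

theorem RS_len : ∀ (j : Fin 3) (w : Fin 48), ∀ y ∈ RS j w, len w < len (ra j w) →
    len y ≤ len w + 1 ∧ (len w + 1 - len y) % 2 = 0 := by
  decide +kernel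

theorem LS_nodup : ∀ (j : Fin 3) (w : Fin 48), len w < len (la j w) → (LS j w).Nodup := by
  decide +kernel

theorem RS_nodup : ∀ (j : Fin 3) (w : Fin 48), len w < len (ra j w) → (RS j w).Nodup := by
  decide +kernel

theorem mu_len : ∀ w : Fin 48, ∀ y ∈ mu w, len y < len w := by decide +kernel

theorem pol_diag : ∀ w : Fin 48, pol w w = [1] := by decide +kernel

theorem pol_low : ∀ w x : Fin 48, x ≠ w →
    pol w x = [] ∨ 2 * (pol w x).length + len x < len w + 2 := by decide +kernel

theorem la_la : ∀ (j : Fin 3) (i : Fin 48), la j (la j i) = i := by decide +kernel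

theorem ra_ra : ∀ (j : Fin 3) (i : Fin 48), ra j (ra j i) = i := by decide +kernel

theorem len_la : ∀ (j : Fin 3) (i : Fin 48),
    len (la j i) = len i + 1 ∨ len i = len (la j i) + 1 := by decide +kernel

theorem len_ra : ∀ (j : Fin 3) (i : Fin 48),
    len (ra j i) = len i + 1 ∨ len i = len (ra j i) + 1 := by decide +kernel

theorem exists_desc : ∀ i : Fin 48, i ≠ 0 → ∃ j : Fin 3, len (la j i) < len i := by
  decide +kernel

theorem wd_len : ∀ i : Fin 48, (wd i).length = len i := by decide +kernel

theorem wd_foldl : ∀ i : Fin 48, (wd i).foldl (fun a j => ra j a) 0 = i := by decide +kernel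

theorem wd_foldr : ∀ i : Fin 48, (wd i).foldr (fun j a => la j a) 0 = i := by decide +kernel

theorem la_wd : ∀ (j : Fin 3) (i : Fin 48),
    (j :: wd i).foldl (fun a j => ra j a) 0 = la j i := by decide +kernel

theorem cox_la : ∀ (j k : Fin 3) (i : Fin 48),
    (fun a => la j (la k a))^[CoxeterMatrix.B 3 j k] i = i := by decide +kernel

/-- The left conditions: the list `f_W(sx)` if it is usable. -/
def lG (j : Fin 3) (i : Fin 48) : Option (List (Fin 48)) :=
  bif Nat.blt (len (la j i)) (len i) then
    (F (la j i)).filter (fun G => G.all (fun w => Nat.blt (len w) (len (la j w))))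
  else none

/-- The right conditions: the list `f_W(xs)` if it is usable. -/
def rG (j : Fin 3) (i : Fin 48) : Option (List (Fin 48)) :=
  bif Nat.blt (len (ra j i)) (len i) then
    (F (ra j i)).filter (fun G => G.all (fun w => Nat.blt (len w) (len (ra j w))))
  else none

theorem F_none : ∀ i : Fin 48, i ≠ 0 →
    ((∀ j : Fin 3, lG j i = none ∧ rG j i = none) ↔ F i = none) := by decide +kernel

/-- Membership test for the intersection defining `f_W`. -/
def inter (i x : Fin 48) : Bool :=
  (List.finRange 3).all (fun j =>
    (lG j i).all (fun G => G.any (fun w => (LS j w).contains x)) &&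
    (rG j i).all (fun G => G.any (fun w => (RS j w).contains x)))

theorem F_chk : ∀ i : Fin 48, i ≠ 0 → (F i).all (fun l =>
    (List.finRange 48).all (fun x => l.contains x == inter i x)) = true := by decide +kernel

theorem F_some (i : Fin 48) (hi : i ≠ 0) (l : List (Fin 48)) (hl : F i = some l) (x : Fin 48) :
    x ∈ l ↔ ((∀ j : Fin 3, ∀ G, lG j i = some G → ∃ w ∈ G, x ∈ LS j w) ∧
      (∀ j : Fin 3, ∀ G, rG j i = some G → ∃ w ∈ G, x ∈ RS j w)) := by
  have h := F_chk i hi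
  rw [hl] at h
  simp only [Option.all_some, List.all_eq_true, List.mem_finRange, true_imp_iff, beq_iff_eq] at h
  have h2 := h x
  rw [← List.contains_iff_mem, h2]
  simp only [inter, List.all_eq_true, List.mem_finRange, true_imp_iff, Bool.and_eq_true,
    forall_and, Option.all_eq_true, List.any_eq_true, List.contains_iff_mem]

/-! ## The group -/

section group

variable {W : Type*} [Group W]

theorem rules (s t u : W)
    (hst : t * (s * t) = s * (t * s)) (hsu : u * s = s * u)
    (htu : u * (t * (u * t)) = t * (u * (t * u))) :
    u * (t * (s * (u * (t * s)))) = t * (u * (t * (s * (u * t)))) := by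
  have h1 : s * (u * (t * s)) = u * (t * (s * t)) := by
    rw [hst, ← mul_assoc, ← hsu, mul_assoc]
  have h2 : u * (t * (s * (u * (t * s)))) = u * (t * (u * t)) * (s * t) := by
    rw [h1]; simp only [mul_assoc]
  rw [h2, htu]
  simp only [mul_assoc]
  rw [← mul_assoc u s t, hsu]
  simp only [mul_assoc]

/-- A complete rewriting system for type B₃. -/
def rwRules : List (List (Fin 3) × List (Fin 3)) :=
  [([0, 0], []), ([1, 1], []), ([2, 2], []), ([2, 0], [0, 2]), ([1, 0, 1], [0, 1, 0]),
    ([2, 1, 2, 1], [1, 2, 1, 2]), ([2, 1, 0, 2, 1, 0], [1, 2, 1, 0, 2, 1])]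

/-- Rewriting at the head of a word. -/
def top (l : List (Fin 3)) : List (Fin 3) :=
  match rwRules.find? (fun r => r.1.isPrefixOf l) with
  | some r => r.2 ++ l.drop r.1.length
  | none => l

/-- A rewriting pass. -/
def pass : List (Fin 3) → List (Fin 3)
  | [] => []
  | a :: l => top (a :: pass l)

theorem pass_chk : ∀ (i : Fin 48) (j : Fin 3), pass^[9] (wd i ++ [j]) = wd (ra j i) := by
  decide +kernel

theorem top_sound (f : Fin 3 → W) (h : ∀ r ∈ rwRules, (r.1.map f).prod = (r.2.map f).prod)
    (l : List (Fin 3)) : ((top l).map f).prod = (l.map f).prod := by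
  unfold top
  split
  · rename_i r hr
    have h1 := List.mem_of_find?_eq_some hr
    have h2 := List.find?_some hr
    rw [List.isPrefixOf_iff_prefix] at h2
    obtain ⟨m, rfl⟩ := h2
    simp [h r h1]
  · rfl

theorem pass_sound (f : Fin 3 → W) (h : ∀ r ∈ rwRules, (r.1.map f).prod = (r.2.map f).prod)
    (l : List (Fin 3)) : ((pass l).map f).prod = (l.map f).prod := by
  induction l with
  | nil => rfl
  | cons a l ih => rw [pass, top_sound f h]; simp [ih]

theorem pass_iter (f : Fin 3 → W) (h : ∀ r ∈ rwRules, (r.1.map f).prod = (r.2.map f).prod)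
    (n : ℕ) (l : List (Fin 3)) : ((pass^[n] l).map f).prod = (l.map f).prod := by
  induction n generalizing l with
  | zero => rfl
  | succ n ih => rw [Function.iterate_succ_apply, ih, pass_sound f h]

variable (cs : CoxeterSystem (CoxeterMatrix.B 3) W)

/-- The `i`-th element of `W`. -/
def e (i : Fin 48) : W := cs.wordProd (wd i)

theorem e_mul (i : Fin 48) (j : Fin 3) : e cs i * cs.simple j = e cs (ra j i) := by
  have hsq := fun k => cs.simple_mul_simple_self k
  have hm := fun k l => cs.simple_mul_simple_pow k l
  have h01 := hm 1 0
  have h02 := hm 2 0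
  have h12 := hm 2 1
  have m01 : CoxeterMatrix.B 3 1 0 = 3 := by decide
  have m02 : CoxeterMatrix.B 3 2 0 = 2 := by decide
  have m12 : CoxeterMatrix.B 3 2 1 = 4 := by decide
  rw [m01] at h01
  rw [m02] at h02
  rw [m12] at h12
  have hss := hsq 0
  have htt := hsq 1
  have huu := hsq 2
  have hw : ∀ i, e cs i = ((wd i).map cs.simple).prod := fun i => rfl
  rw [hw, hw]
  clear hw hsq hm m01 m02 m12
  generalize hf : cs.simple = f at *
  obtain ⟨s, hs⟩ : ∃ s, f 0 = s := ⟨_, rfl⟩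
  obtain ⟨t, ht⟩ : ∃ t, f 1 = t := ⟨_, rfl⟩
  obtain ⟨u, hu⟩ : ∃ u, f 2 = u := ⟨_, rfl⟩
  rw [hs, ht] at h01
  rw [hs, hu] at h02
  rw [ht, hu] at h12
  rw [hs] at hss
  rw [ht] at htt
  rw [hu] at huu
  have is : s⁻¹ = s := inv_eq_of_mul_eq_one_left hss
  have it : t⁻¹ = t := inv_eq_of_mul_eq_one_left htt
  have iu : u⁻¹ = u := inv_eq_of_mul_eq_one_left huu
  have hst : t * (s * t) = s * (t * s) := by
    have : (t * (s * t)) * (s * (t * s)) = 1 := by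
      rw [← h01]; simp only [pow_succ, pow_zero, one_mul, mul_assoc]
    have h := mul_eq_one_iff_eq_inv.mp this
    rw [h]; simp only [mul_inv_rev, is, it, mul_assoc]
  have hsu : u * s = s * u := by
    have : (u * s) * (u * s) = 1 := by
      rw [← h02]; simp only [pow_succ, pow_zero, one_mul]
    have h := mul_eq_one_iff_eq_inv.mp this
    rw [h]; simp only [mul_inv_rev, is, iu]
  have htu : u * (t * (u * t)) = t * (u * (t * u)) := by
    have : (u * (t * (u * t))) * (u * (t * (u * t))) = 1 := by
      rw [← h12]; simp only [pow_succ, pow_zero, one_mul, mul_assoc]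
    have h := mul_eq_one_iff_eq_inv.mp this
    rw [h]; simp only [mul_inv_rev, it, iu, mul_assoc]
  have hr := rules s t u hst hsu htu
  have hR : ∀ r ∈ rwRules, (r.1.map f).prod = (r.2.map f).prod := by
    simp [rwRules, hs, ht, hu, hss, htt, huu, hst, hsu, htu, hr]
  rw [← pass_chk i j, pass_iter f hR]
  simp

theorem e_zero : e cs 0 = 1 := rfl

theorem foldl_e (l : List (Fin 3)) (i : Fin 48) :
    e cs i * (l.map cs.simple).prod = e cs (l.foldl (fun a j => ra j a) i) := by
  induction l generalizing i with
  | nil => simp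
  | cons j l ih => simp [← ih, ← e_mul, mul_assoc]

theorem word_e (l : List (Fin 3)) :
    (l.map cs.simple).prod = e cs (l.foldl (fun a j => ra j a) 0) := by
  rw [← foldl_e, e_zero, one_mul]

theorem mul_e (i : Fin 48) (j : Fin 3) : cs.simple j * e cs i = e cs (la j i) := by
  rw [← la_wd, ← word_e]
  simp [e, CoxeterSystem.wordProd]

theorem e_surj : Function.Surjective (e cs) := by
  intro x
  obtain ⟨l, rfl⟩ := cs.wordProd_surjective x
  exact ⟨_, (word_e cs l).symm⟩

/-- The left regular action on indices. -/
def act : W →* Function.End (Fin 48) :=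
  cs.lift ⟨fun j => (la j : Function.End (Fin 48)), by
    intro j k
    have h : ∀ (g : Function.End (Fin 48)) (n : ℕ), g ^ n = g^[n] := by
      intro g n
      induction n with
      | zero => rfl
      | succ n ih => rw [pow_succ, ih]; rfl
    rw [h]
    funext i
    exact cox_la j k i⟩

theorem act_e (i : Fin 48) : act cs (e cs i) 0 = i := by
  have h : ∀ l : List (Fin 3), act cs (l.map cs.simple).prod 0 =
      l.foldr (fun j a => la j a) 0 := by
    intro l
    induction l with
    | nil => simp; rfl
    | cons j l ih =>
      rw [List.map_cons, List.prod_cons, map_mul, List.foldr_cons, ← ih]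
      have : act cs (cs.simple j) = la j := cs.lift_apply_simple _ j
      rw [this]; rfl
  exact (h (wd i)).trans (wd_foldr i)

theorem e_inj : Function.Injective (e cs) := fun i k h => by
  rw [← act_e cs i, h, act_e]

end group

theorem la_ra : ∀ (k j : Fin 3) (i : Fin 48), la k (ra j i) = ra j (la k i) := by decide +kernel

theorem len_zero : len 0 = 0 := by decide +kernel

theorem LS_zero : ∀ j : Fin 3, LS j 0 = [la j 0] := by decide +kernel

theorem la_zero : ∀ j : Fin 3, la j 0 = ra j 0 := by decide +kernel

theorem len_la_zero : ∀ j : Fin 3, len (la j 0) = 1 := by decide +kernel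

theorem eq_zero_of_len : ∀ i : Fin 48, len i = 0 → i = 0 := by decide +kernel

/-! ## Length and Bruhat order -/

section bruhat

open KLPaper

variable {W : Type*} [Group W] (cs : CoxeterSystem (CoxeterMatrix.B 3) W) {S : Set W}
  (hS : S = Set.range cs.simple)

include hS

theorem wl (i : Fin 48) : wordLength S (e cs i) = len i := by
  have hmem : len i ∈ {k | ∃ l : List W, l.length = k ∧ (∀ x ∈ l, x ∈ S) ∧ l.prod = e cs i} := by
    refine ⟨(wd i).map cs.simple, by simp [wd_len], ?_, rfl⟩
    intro x hx
    rw [hS]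
    obtain ⟨j, -, rfl⟩ := List.mem_map.mp hx
    exact ⟨j, rfl⟩
  refine le_antisymm (Nat.sInf_le hmem) (le_csInf ⟨_, hmem⟩ ?_)
  rintro k ⟨l, rfl, hl, hp⟩
  have : ∃ m : List (Fin 3), l = m.map cs.simple := by
    clear hp hmem
    induction l with
    | nil => exact ⟨[], rfl⟩
    | cons a l ih =>
      obtain ⟨m, rfl⟩ := ih (fun x hx => hl x (List.mem_cons_of_mem _ hx))
      have ha := hl a (List.mem_cons_self)
      rw [hS] at ha
      obtain ⟨j, rfl⟩ := ha
      exact ⟨j :: m, rfl⟩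
  obtain ⟨m, rfl⟩ := this
  rw [word_e] at hp
  rw [← e_inj cs hp, List.length_map]
  have h : ∀ (m : List (Fin 3)) (i : Fin 48),
      len (m.foldl (fun a j => ra j a) i) ≤ len i + m.length := by
    intro m
    induction m with
    | nil => simp
    | cons j m ih =>
      intro i
      have h1 := ih (ra j i)
      have h2 := len_ra j i
      simp only [List.foldl_cons, List.length_cons]
      omega
  simpa [len_zero] using h m 0

omit hS in
theorem bruhat_len {a b : W} (h : bruhatLT S a b) : wordLength S a < wordLength S b := by
  induction h with
  | single h => exact h.choose_spec.2.2
  | tail _ h ih => exact ih.trans h.choose_spec.2.2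

theorem bruhat_l (i : Fin 48) (j : Fin 3) :
    bruhatLT S (e cs i) (cs.simple j * e cs i) ↔ len i < len (la j i) := by
  rw [mul_e, ← wl cs hS, ← wl cs hS]
  refine ⟨bruhat_len, fun h => Relation.TransGen.single ⟨(e cs i)⁻¹ * cs.simple j * e cs i,
    ⟨(e cs i)⁻¹, cs.simple j, by rw [hS]; exact ⟨j, rfl⟩, by simp⟩, ?_, h⟩⟩
  rw [← mul_e]; group

theorem bruhat_l' (i : Fin 48) (j : Fin 3) :
    bruhatLT S (cs.simple j * e cs i) (e cs i) ↔ len (la j i) < len i := by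
  have := bruhat_l cs hS (la j i) j
  rwa [mul_e, la_la, ← mul_e] at this

theorem bruhat_r (i : Fin 48) (j : Fin 3) :
    bruhatLT S (e cs i) (e cs i * cs.simple j) ↔ len i < len (ra j i) := by
  rw [e_mul, ← wl cs hS, ← wl cs hS]
  refine ⟨bruhat_len, fun h => Relation.TransGen.single ⟨cs.simple j,
    ⟨1, cs.simple j, by rw [hS]; exact ⟨j, rfl⟩, by simp⟩, ?_, h⟩⟩
  rw [← e_mul]

theorem bruhat_r' (i : Fin 48) (j : Fin 3) :
    bruhatLT S (e cs i * cs.simple j) (e cs i) ↔ len (ra j i) < len i := by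
  have := bruhat_r cs hS (ra j i) j
  rwa [e_mul, ra_ra, ← e_mul] at this

end bruhat

/-! ## The Hecke algebra -/

section hecke

open KLPaper LaurentPolynomial

variable {W : Type*} [Group W] (cs : CoxeterSystem (CoxeterMatrix.B 3) W) {S : Set W}
  (hS : S = Set.range cs.simple) (K : KLData S)

theorem simple_eq (j : Fin 3) : cs.simple j = e cs (la j 0) := by
  rw [← mul_e, e_zero, mul_one]

theorem std_apply (x y : Fin 48) : std (e cs x) (e cs y) = if x = y then 1 else 0 := by
  rw [std, Finsupp.single_apply]
  simp only [(e_inj cs).eq_iff]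

include hS in
theorem gen_up (j : Fin 3) (y : Fin 48) (h : len y < len (la j y)) :
    K.mul (std (cs.simple j)) (std (e cs y)) = std (e cs (la j y)) := by
  rw [K.mul_gen_of_lt _ (by rw [hS]; exact ⟨j, rfl⟩) _ ((bruhat_l cs hS y j).mpr h), mul_e]

include hS in
theorem gen_down (j : Fin 3) (y : Fin 48) (h : len (la j y) < len y) :
    K.mul (std (cs.simple j)) (std (e cs y)) =
      ((T 1 : LaurentPolynomial ℤ) - T (-1)) • std (e cs y) + std (e cs (la j y)) := by
  rw [K.mul_gen_of_gt _ (by rw [hS]; exact ⟨j, rfl⟩) _ ((bruhat_l' cs hS y j).mpr h), mul_e]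

include hS in
theorem gen_sq (j : Fin 3) : K.mul (std (cs.simple j)) (std (cs.simple j)) =
      ((T 1 : LaurentPolynomial ℤ) - T (-1)) • std (cs.simple j) + std 1 := by
  have := gen_down cs hS K j (la j 0) (by rw [la_la, len_zero, len_la_zero]; norm_num)
  rwa [la_la, ← simple_eq, e_zero] at this

include hS in
theorem gen_up_r (j : Fin 3) (n : ℕ) : ∀ y : Fin 48, len y = n → len y < len (ra j y) →
    K.mul (std (e cs y)) (std (cs.simple j)) = std (e cs (ra j y)) := by
  induction n with
  | zero =>
    intro y hy _
    rw [eq_zero_of_len y hy, e_zero, K.one_mul, simple_eq, la_zero]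
  | succ n ih =>
    intro y hy h
    have hy0 : y ≠ 0 := by rintro rfl; rw [len_zero] at hy; omega
    obtain ⟨k, hk⟩ := exists_desc y hy0
    obtain ⟨z, rfl⟩ : ∃ z, y = la k z := ⟨la k y, (la_la k y).symm⟩
    rw [la_la] at hk
    have h1 := len_la k z
    have h2 := len_ra j (la k z)
    have h3 := len_ra j z
    have h4 := len_la k (ra j z)
    rw [la_ra] at h4
    rw [← gen_up cs hS K k z hk, K.mul_assoc, ih z (by omega) (by omega),
      gen_up cs hS K k _ (by rw [la_ra]; omega), la_ra]

include hS in
theorem gen_down_r (j : Fin 3) (y : Fin 48) (h : len (ra j y) < len y) :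
    K.mul (std (e cs y)) (std (cs.simple j)) =
      ((T 1 : LaurentPolynomial ℤ) - T (-1)) • std (e cs y) + std (e cs (ra j y)) := by
  obtain ⟨z, rfl⟩ : ∃ z, y = ra j z := ⟨ra j y, (ra_ra j y).symm⟩
  rw [ra_ra] at h ⊢
  have h1 := gen_up_r cs hS K j _ z rfl h
  rw [← h1, K.mul_assoc, gen_sq cs hS K, K.mul_add_right, K.mul_smul_right, K.mul_one]

/-- The Kazhdan-Lusztig generator. -/
def cj (j : Fin 3) : HMod W := std (cs.simple j) + (T (-1) : LaurentPolynomial ℤ) • std 1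

theorem mul_zero_r (a : HMod W) : K.mul a 0 = 0 := by
  have := K.mul_smul_right 0 a 0
  simpa using this

theorem mul_zero_l (a : HMod W) : K.mul 0 a = 0 := by
  have := K.mul_smul_left 0 0 a
  simpa using this

/-- The sign exponent. -/
def sg (x' x : Fin 48) : LaurentPolynomial ℤ := if len x' < len x then T 1 else T (-1)

include hS in
theorem cj_mul_std (j : Fin 3) (y : Fin 48) :
    K.mul (cj cs j) (std (e cs y)) = std (e cs (la j y)) + sg (la j y) y • std (e cs y) := by
  rw [cj, K.mul_add_left, K.mul_smul_left, K.one_mul, sg]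
  have := len_la j y
  split_ifs with h
  · rw [gen_down cs hS K j y h, sub_smul]; abel
  · rw [gen_up cs hS K j y (by omega)]

include hS in
theorem std_mul_cj (j : Fin 3) (y : Fin 48) :
    K.mul (std (e cs y)) (cj cs j) = std (e cs (ra j y)) + sg (ra j y) y • std (e cs y) := by
  rw [cj, K.mul_add_right, K.mul_smul_right, K.mul_one, sg]
  have := len_ra j y
  split_ifs with h
  · rw [gen_down_r cs hS K j y h, sub_smul]; abel
  · rw [gen_up_r cs hS K j _ y rfl (by omega)]

theorem single_std (x : W) (r : LaurentPolynomial ℤ) :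
    (Finsupp.single x r : HMod W) = r • std x := by
  simp [std]

include hS in
theorem coefL (j : Fin 3) (h : HMod W) (x : Fin 48) :
    K.mul (cj cs j) h (e cs x) = h (e cs (la j x)) + sg (la j x) x * h (e cs x) := by
  induction h using Finsupp.induction_linear with
  | zero => simp [mul_zero_r]
  | add f g hf hg =>
    rw [K.mul_add_right, Finsupp.add_apply, hf, hg]
    simp only [Finsupp.add_apply]; ring
  | single y r =>
    obtain ⟨y, rfl⟩ := e_surj cs y
    rw [single_std, K.mul_smul_right, cj_mul_std cs hS]
    simp only [Finsupp.smul_apply, Finsupp.add_apply, std_apply, smul_eq_mul]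
    have h1 : la j y = x ↔ y = la j x :=
      ⟨fun h => by rw [← h, la_la], fun h => by rw [h, la_la]⟩
    simp only [h1]
    by_cases h2 : y = x
    · subst h2; simp only [if_true]; ring
    · simp [h2]

include hS in
theorem coefR (j : Fin 3) (h : HMod W) (x : Fin 48) :
    K.mul h (cj cs j) (e cs x) = h (e cs (ra j x)) + sg (ra j x) x * h (e cs x) := by
  induction h using Finsupp.induction_linear with
  | zero => simp [mul_zero_l]
  | add f g hf hg =>
    rw [K.mul_add_left, Finsupp.add_apply, hf, hg]
    simp only [Finsupp.add_apply]; ring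
  | single y r =>
    obtain ⟨y, rfl⟩ := e_surj cs y
    rw [single_std, K.mul_smul_left, std_mul_cj cs hS]
    simp only [Finsupp.smul_apply, Finsupp.add_apply, std_apply, smul_eq_mul]
    have h1 : ra j y = x ↔ y = ra j x :=
      ⟨fun h => by rw [← h, ra_ra], fun h => by rw [h, ra_ra]⟩
    simp only [h1]
    by_cases h2 : y = x
    · subst h2; simp only [if_true]; ring
    · simp [h2]

/-! ### The bar involution -/

theorem bar_one : K.bar (std 1) = std 1 := by
  rw [K.bar_std, inv_one]
  have := K.mul_sinv 1
  rwa [K.one_mul] at this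

include hS in
theorem bar_gen (j : Fin 3) :
    K.bar (std (cs.simple j)) = cj cs j + (-T 1 : LaurentPolynomial ℤ) • std 1 := by
  rw [K.bar_std, cs.inv_simple]
  set a := cj cs j + (-T 1 : LaurentPolynomial ℤ) • std 1 with ha
  have h1 : K.mul (std (cs.simple j)) a = std 1 := by
    rw [ha, cj, K.mul_add_right, K.mul_add_right, K.mul_smul_right, K.mul_smul_right, K.mul_one,
      gen_sq cs hS K, sub_smul, neg_smul]
    abel
  calc K.sinv (cs.simple j) = K.mul (K.sinv (cs.simple j)) (K.mul (std (cs.simple j)) a) := by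
        rw [h1, K.mul_one]
    _ = a := by rw [← K.mul_assoc, K.sinv_mul, K.one_mul]

include hS in
theorem bar_cj (j : Fin 3) : K.bar (cj cs j) = cj cs j := by
  conv_lhs => rw [cj]
  rw [K.bar_add, K.bar_smul, bar_one, bar_gen cs hS K, invert_T, neg_neg, add_assoc, ← add_smul]
  simp

/-- The bar involution as an additive map. -/
def barHom : HMod W →+ HMod W := AddMonoidHom.mk' K.bar K.bar_add

include hS in
theorem bar_triang (n : ℕ) : ∀ x : Fin 48, len x = n → ∀ y : Fin 48, n ≤ len y →
    K.bar (std (e cs x)) (e cs y) = if x = y then 1 else 0 := by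
  induction n with
  | zero =>
    intro x hx y _
    rw [eq_zero_of_len x hx, e_zero, bar_one, ← e_zero cs, std_apply]
  | succ n ih =>
    intro x hx y hy
    have hx0 : x ≠ 0 := by rintro rfl; rw [len_zero] at hx; omega
    obtain ⟨k, hk⟩ := exists_desc x hx0
    obtain ⟨z, rfl⟩ : ∃ z, x = la k z := ⟨la k x, (la_la k x).symm⟩
    rw [la_la] at hk
    have h1 := len_la k z
    have h2 := len_la k y
    rw [← gen_up cs hS K k z hk, K.bar_mul, bar_gen cs hS K, K.mul_add_left, K.mul_smul_left,
      K.one_mul, Finsupp.add_apply, coefL cs hS, Finsupp.smul_apply,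
      ih z (by omega) y (by omega), ih z (by omega) (la k y) (by omega)]
    have h3 : z ≠ y := by rintro rfl; omega
    have h4 : z = la k y ↔ la k z = y :=
      ⟨fun h => by rw [h, la_la], fun h => by rw [← h, la_la]⟩
    simp [h3, h4]

/-- Laurent polynomials with only negative exponents. -/
def Neg (a : LaurentPolynomial ℤ) : Prop := ∀ n : ℤ, 0 ≤ n → a.coeff n = 0

theorem neg_of_span {a : LaurentPolynomial ℤ} (h : a ∈
    Submodule.span ℤ ((fun n : ℤ => (T n : LaurentPolynomial ℤ)) '' {n : ℤ | n < 0})) :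
    Neg a := by
  induction h using Submodule.span_induction with
  | mem x hx =>
    obtain ⟨m, hm, rfl⟩ := hx
    intro n hn
    have : m ≠ n := by simp only [Set.mem_ofPred_eq] at hm; omega
    simp [this]
  | zero => intro n _; simp
  | add x y _ _ hx hy => intro n hn; simp [hx n hn, hy n hn]
  | smul r x _ hx =>
    intro n hn
    have h1 : (r • x).coeff n = r • x.coeff n := rfl
    rw [h1, hx n hn, smul_zero]

theorem neg_invert {a : LaurentPolynomial ℤ} (h : Neg a) (h2 : invert a = a) : a = 0 := by
  apply LaurentPolynomial.ext
  intro n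
  rcases le_or_gt 0 n with hn | hn
  · rw [h n hn]; simp
  · rw [← h2, invert_apply, h (-n) (by omega)]; simp

theorem expand (h : HMod W) : h = ∑ y : Fin 48, h (e cs y) • std (e cs y) := by
  ext1 x
  obtain ⟨x, rfl⟩ := e_surj cs x
  rw [Finsupp.finsetSum_apply]
  simp [std_apply]

include hS in
theorem bar_fixed_zero (h : HMod W) (hb : K.bar h = h) (hn : ∀ x, Neg (h (e cs x))) : h = 0 := by
  by_contra hne
  have hex : ∃ x, h (e cs x) ≠ 0 := by
    by_contra hcon
    push Not at hcon
    apply hne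
    rw [expand cs h]
    simp [hcon]
  obtain ⟨x0, hx0⟩ := hex
  obtain ⟨x, hx, hmax⟩ := Finset.exists_max_image
    (Finset.univ.filter (fun x => h (e cs x) ≠ 0)) len ⟨x0, by simp [hx0]⟩
  simp only [Finset.mem_filter, Finset.mem_univ, true_and] at hx hmax
  apply hx
  apply neg_invert (hn x)
  have h1 : K.bar h = ∑ y : Fin 48, invert (h (e cs y)) • K.bar (std (e cs y)) := by
    conv_lhs => rw [expand cs h]
    change barHom K _ = _
    rw [map_sum]
    refine Finset.sum_congr rfl fun y _ => K.bar_smul _ _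
  have h2 : K.bar h (e cs x) = invert (h (e cs x)) := by
    rw [h1, Finsupp.finsetSum_apply, Finset.sum_eq_single x]
    · rw [Finsupp.smul_apply, bar_triang cs hS K _ x rfl x le_rfl]; simp
    · intro y _ hyx
      by_cases hy : h (e cs y) = 0
      · simp [hy]
      · rw [Finsupp.smul_apply, bar_triang cs hS K _ y rfl x (hmax y hy)]; simp [hyx]
    · simp
  rw [← h2, hb]

/-! ### Evaluation of coefficient lists -/

/-- The Laurent polynomial `∑ l_k v ^ (2 k)`. -/
def ev : List ℕ → LaurentPolynomial ℤ
  | [] => 0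
  | a :: l => (a : LaurentPolynomial ℤ) + T 2 * ev l

theorem ev_addL : ∀ l m : List ℕ, ev (addL l m) = ev l + ev m
  | [], m => by simp [addL, ev]
  | a :: l, [] => by simp [addL, ev]
  | a :: l, b :: m => by
    simp only [addL, ev, ev_addL l m, Nat.cast_add]
    ring

theorem ev_shL : ∀ (k : ℕ) (l : List ℕ), ev (shL k l) = T (2 * (k : ℤ)) * ev l
  | 0, l => by simp [shL]
  | k + 1, l => by
    simp only [shL, ev, ev_shL k l, Nat.cast_zero, zero_add, ← mul_assoc, ← T_add]
    congr 2
    push_cast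
    ring

theorem ev_zeroL : ∀ l : List ℕ, zeroL l = true → ev l = 0
  | [], _ => rfl
  | a :: l, h => by
    simp only [zeroL, Bool.and_eq_true, Nat.beq_eq] at h
    simp [ev, h.1, ev_zeroL l h.2]

theorem ev_eqL : ∀ l m : List ℕ, eqL l m = true → ev l = ev m
  | [], m, h => by
    simp only [eqL] at h
    rw [ev_zeroL m h, ev]
  | a :: l, [], h => by
    simp only [eqL, Bool.and_eq_true, Nat.beq_eq] at h
    simp [ev, h.1, ev_zeroL l h.2]
  | a :: l, b :: m, h => by
    simp only [eqL, Bool.and_eq_true, Nat.beq_eq] at h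
    simp [ev, h.1, ev_eqL l m h.2]

/-- The coefficient of `H_x` in `h_w`. -/
def co (w x : Fin 48) : LaurentPolynomial ℤ := T ((len x : ℤ) - len w) * ev (pol w x)

theorem ev_sumL (w x : Fin 48) : ∀ l : List (Fin 48),
    (∀ y ∈ l, len y ≤ len w + 1 ∧ (len w + 1 - len y) % 2 = 0) →
    T ((len x : ℤ) - len w - 1) * ev (sumL w x l) = (l.map (fun y => co y x)).sum
  | [], _ => by simp [sumL, ev]
  | y :: l, h => by
    have h1 := h y List.mem_cons_self
    rw [sumL, ev_addL, ev_shL, mul_add, ev_sumL w x l (fun z hz => h z (List.mem_cons_of_mem _ hz)),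
      List.map_cons, List.sum_cons, co, ← mul_assoc, ← T_add]
    congr 3
    omega

theorem chk_sound (w x x' : Fin 48) (l : List (Fin 48))
    (hx : len x' = len x + 1 ∨ len x = len x' + 1)
    (hl : ∀ y ∈ l, len y ≤ len w + 1 ∧ (len w + 1 - len y) % 2 = 0)
    (h : chk w x x' l = true) :
    co w x' + sg x' x * co w x = (l.map (fun y => co y x)).sum := by
  rw [← ev_sumL w x l hl, ← ev_eqL _ _ h, co, co, sg]
  by_cases hlt : len x' < len x
  · have h1 : Nat.blt (len x') (len x) = true := by rw [Nat.blt_eq]; exact hlt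
    have h2 : (len x' : ℤ) - len w = (len x : ℤ) - len w - 1 := by omega
    rw [h1, if_pos hlt, cond_true, ev_addL, ev, h2, mul_add, Nat.cast_zero, zero_add,
      ← mul_assoc, ← mul_assoc, ← T_add, ← T_add]
    congr 3
    ring
  · have h1 : Nat.blt (len x') (len x) = false := by
      rw [Bool.eq_false_iff, Ne, Nat.blt_eq]; exact hlt
    rw [h1, if_neg hlt, cond_false, ev_addL, ev, mul_add, Nat.cast_zero, zero_add,
      ← mul_assoc, ← mul_assoc, ← T_add, ← T_add]
    congr 3
    · omega
    · ring

/-- The candidate Kazhdan-Lusztig basis. -/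
def b (i : Fin 48) : HMod W := ∑ x : Fin 48, co i x • std (e cs x)

theorem b_apply (i x : Fin 48) : b cs i (e cs x) = co i x := by
  rw [b, Finsupp.finsetSum_apply]
  simp [std_apply]

theorem ext_e {g h : HMod W} (H : ∀ x, g (e cs x) = h (e cs x)) : g = h := by
  ext1 x
  obtain ⟨x, rfl⟩ := e_surj cs x
  exact H x

theorem sum_b_apply (x : Fin 48) : ∀ l : List (Fin 48),
    (l.map (b cs)).sum (e cs x) = (l.map (fun y => co y x)).sum
  | [] => by simp
  | y :: l => by
    rw [List.map_cons, List.sum_cons, Finsupp.add_apply, sum_b_apply x l, b_apply]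
    simp

include hS in
theorem main_L (j : Fin 3) (w : Fin 48) (h : len w < len (la j w)) :
    K.mul (cj cs j) (b cs w) = ((LS j w).map (b cs)).sum := by
  apply ext_e cs
  intro x
  rw [coefL cs hS, b_apply, b_apply, sum_b_apply]
  exact chk_sound w x _ _ (len_la j x) (fun y hy => LS_len j w y hy h)
    (chkL j w (by rw [Nat.blt_eq]; exact h) x)

include hS in
theorem main_R (j : Fin 3) (w : Fin 48) (h : len w < len (ra j w)) :
    K.mul (b cs w) (cj cs j) = ((RS j w).map (b cs)).sum := by
  apply ext_e cs
  intro x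
  rw [coefR cs hS, b_apply, b_apply, sum_b_apply]
  exact chk_sound w x _ _ (len_ra j x) (fun y hy => RS_len j w y hy h)
    (chkR j w (by rw [Nat.blt_eq]; exact h) x)

theorem co_diag (i : Fin 48) : co i i = 1 := by
  simp [co, pol_diag, ev]

theorem neg_add {p q : LaurentPolynomial ℤ} (hp : Neg p) (hq : Neg q) : Neg (p + q) := by
  intro n hn
  simp [hp n hn, hq n hn]

theorem neg_sub {p q : LaurentPolynomial ℤ} (hp : Neg p) (hq : Neg q) : Neg (p - q) := by
  intro n hn
  simp [hp n hn, hq n hn]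

theorem neg_zero : Neg 0 := by
  intro n hn
  simp

theorem neg_ev : ∀ (l : List ℕ) (m : ℤ), l = [] ∨ m + 2 * l.length < 2 → Neg (T m * ev l)
  | [], m, _ => by rw [ev, mul_zero]; exact neg_zero
  | a :: l, m, h => by
    have h1 : m + 2 * ((l.length : ℤ) + 1) < 2 := by
      rcases h with h | h
      · simp at h
      · simpa using h
    rw [ev, mul_add, ← mul_assoc, ← T_add]
    refine neg_add ?_ (neg_ev l (m + 2) (Or.inr (by omega)))
    intro n hn
    have h2 : m ≠ n := by omega
    have h3 : (T m * (a : LaurentPolynomial ℤ)) = a • T m := by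
      rw [nsmul_eq_mul, mul_comm]
    have h4 : (a • (T m : LaurentPolynomial ℤ)).coeff n = a • (T m : LaurentPolynomial ℤ).coeff n :=
      rfl
    rw [h3, h4]
    simp [h2]

theorem neg_co (w x : Fin 48) (h : x ≠ w) : Neg (co w x) := by
  apply neg_ev
  rcases pol_low w x h with h | h
  · exact Or.inl h
  · right; omega

theorem pol_zero : ∀ x : Fin 48, pol 0 x = if x = 0 then [1] else [] := by decide +kernel

theorem b_zero : b cs 0 = std 1 := by
  apply ext_e cs
  intro x
  rw [b_apply, ← e_zero cs, std_apply]
  by_cases h : x = 0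
  · rw [h, co_diag, if_pos rfl]
  · rw [co, pol_zero, if_neg h, if_neg (Ne.symm h), ev, mul_zero]

theorem bar_sum (l : List (HMod W)) : K.bar l.sum = (l.map K.bar).sum :=
  map_list_sum (barHom K) l

include hS in
theorem bar_b (n : ℕ) : ∀ i : Fin 48, len i ≤ n → K.bar (b cs i) = b cs i := by
  induction n with
  | zero =>
    intro i hi
    rw [eq_zero_of_len i (by omega), b_zero, bar_one]
  | succ n ih =>
    intro i hi
    by_cases hi0 : i = 0
    · rw [hi0, b_zero, bar_one]
    obtain ⟨k, hk⟩ := exists_desc i hi0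
    obtain ⟨z, rfl⟩ : ∃ z, i = la k z := ⟨la k i, (la_la k i).symm⟩
    rw [la_la] at hk
    have h1 := main_L cs hS K k z hk
    have h2 : K.bar (K.mul (cj cs k) (b cs z)) = K.mul (cj cs k) (b cs z) := by
      rw [K.bar_mul, bar_cj cs hS, ih z (by omega)]
    rw [h1, LS, List.map_cons, List.sum_cons, K.bar_add, bar_sum, List.map_map] at h2
    have h3 : ((mu z).filter (fun y => Nat.blt (len (la k y)) (len y))).map (K.bar ∘ b cs) =
        ((mu z).filter (fun y => Nat.blt (len (la k y)) (len y))).map (b cs) := by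
      apply List.map_congr_left
      intro y hy
      have h4 := mu_len z y (List.mem_filter.mp hy).1
      exact ih y (by omega)
    rw [h3] at h2
    exact add_right_cancel h2

include hS in
theorem klb_eq (i : Fin 48) : K.klb (e cs i) = b cs i := by
  have h1 : K.klb (e cs i) - b cs i = 0 := by
    apply bar_fixed_zero cs hS K
    · have : K.bar (K.klb (e cs i) - b cs i) = K.bar (K.klb (e cs i)) - K.bar (b cs i) :=
        map_sub (barHom K) _ _
      rw [this, K.klb_bar, bar_b cs hS K _ i le_rfl]
    · intro x
      rw [Finsupp.sub_apply, b_apply]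
      by_cases hx : x = i
      · rw [hx, K.klb_diag, co_diag, sub_self]; exact neg_zero
      · exact neg_sub (neg_of_span (K.klb_lower _ _ (fun h => hx (e_inj cs h)))) (neg_co i x hx)
  exact sub_eq_zero.mp h1

include hS in
theorem klb_simple (j : Fin 3) : K.klb (cs.simple j) = cj cs j := by
  have h := main_L cs hS K j 0 (by rw [len_zero, len_la_zero]; norm_num)
  rw [b_zero, K.mul_one, LS_zero] at h
  rw [simple_eq, klb_eq cs hS, h]
  simp

theorem supp_sum (l : List (Fin 48)) (hl : l.Nodup) :
    suppKL K ((l.map (fun y => K.klb (e cs y))).sum) = {x | ∃ y ∈ l, x = e cs y} := by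
  set c : W →₀ LaurentPolynomial ℤ := ∑ y ∈ l.toFinset, Finsupp.single (e cs y) 1 with hc
  have h1 : (l.map (fun y => K.klb (e cs y))).sum = c.sum fun x a => a • K.klb x := by
    have h2 : (c.sum fun x a => a • K.klb x) =
        Finsupp.linearCombination (LaurentPolynomial ℤ) K.klb c := rfl
    rw [h2, hc, map_sum, ← List.sum_toFinset _ hl]
    simp
  have h3 : ∀ x, c (e cs x) = if x ∈ l then 1 else 0 := by
    intro x
    rw [hc, Finsupp.finsetSum_apply]
    simp only [Finsupp.single_apply, (e_inj cs).eq_iff]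
    simp
  have h4 : ∀ c' : W →₀ LaurentPolynomial ℤ, (l.map (fun y => K.klb (e cs y))).sum =
      (c'.sum fun x a => a • K.klb x) → c' = c :=
    fun c' h => (K.klb_basis _).unique h h1
  ext x
  obtain ⟨x, rfl⟩ := e_surj cs x
  constructor
  · intro h
    have h5 := h c h1
    rw [h3] at h5
    refine ⟨x, ?_, rfl⟩
    by_contra h6
    exact h5 (if_neg h6)
  · rintro ⟨y, hy, hxy⟩ c' hc'
    rw [h4 c' hc', hxy, h3, if_pos hy]
    exact one_ne_zero

include hS in
theorem supp_L (j : Fin 3) (w : Fin 48) (h : len w < len (la j w)) :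
    suppKL K (K.mul (K.klb (cs.simple j)) (K.klb (e cs w))) = {x | ∃ y ∈ LS j w, x = e cs y} := by
  rw [klb_simple cs hS, klb_eq cs hS, main_L cs hS K j w h, ← supp_sum cs K _ (LS_nodup j w h)]
  simp only [klb_eq cs hS]

include hS in
theorem supp_R (j : Fin 3) (w : Fin 48) (h : len w < len (ra j w)) :
    suppKL K (K.mul (K.klb (e cs w)) (K.klb (cs.simple j))) = {x | ∃ y ∈ RS j w, x = e cs y} := by
  rw [klb_simple cs hS, klb_eq cs hS, main_R cs hS K j w h, ← supp_sum cs K _ (RS_nodup j w h)]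
  simp only [klb_eq cs hS]

/-! ### The partial function `f_W` -/

/-- The subset of `W` given by a list of indices. -/
def toS (l : List (Fin 48)) : Set W := {x | ∃ y ∈ l, x = e cs y}

theorem mem_toS (l : List (Fin 48)) (x : Fin 48) : e cs x ∈ toS cs l ↔ x ∈ l := by
  constructor
  · rintro ⟨y, hy, h⟩
    rwa [e_inj cs h]
  · intro h
    exact ⟨x, h, rfl⟩

include hS in
theorem upL_iff (j : Fin 3) (l : List (Fin 48)) :
    upLeft S (cs.simple j) (toS cs l) = toS cs l ↔ ∀ w ∈ l, len w < len (la j w) := by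
  constructor
  · intro h w hw
    rw [← mem_toS cs, ← h] at hw
    exact (bruhat_l cs hS w j).mp hw.2
  · intro h
    apply Set.Subset.antisymm
    · exact fun x hx => hx.1
    · rintro x ⟨y, hy, rfl⟩
      exact ⟨⟨y, hy, rfl⟩, (bruhat_l cs hS y j).mpr (h y hy)⟩

include hS in
theorem upR_iff (j : Fin 3) (l : List (Fin 48)) :
    upRight S (cs.simple j) (toS cs l) = toS cs l ↔ ∀ w ∈ l, len w < len (ra j w) := by
  constructor
  · intro h w hw
    rw [← mem_toS cs, ← h] at hw
    exact (bruhat_r cs hS w j).mp hw.2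
  · intro h
    apply Set.Subset.antisymm
    · exact fun x hx => hx.1
    · rintro x ⟨y, hy, rfl⟩
      exact ⟨⟨y, hy, rfl⟩, (bruhat_r cs hS y j).mpr (h y hy)⟩

theorem lG_iff (j : Fin 3) (i : Fin 48) (l : List (Fin 48)) :
    lG j i = some l ↔ len (la j i) < len i ∧ F (la j i) = some l ∧
      ∀ w ∈ l, len w < len (la j w) := by
  rw [lG]
  by_cases h : len (la j i) < len i
  · have h1 : Nat.blt (len (la j i)) (len i) = true := by rw [Nat.blt_eq]; exact h
    rw [h1, cond_true, Option.filter_eq_some_iff]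
    simp only [List.all_eq_true, Nat.blt_eq, h, true_and]
  · have h1 : Nat.blt (len (la j i)) (len i) = false := by
      rw [Bool.eq_false_iff, Ne, Nat.blt_eq]; exact h
    rw [h1, cond_false]
    simp [h]

theorem rG_iff (j : Fin 3) (i : Fin 48) (l : List (Fin 48)) :
    rG j i = some l ↔ len (ra j i) < len i ∧ F (ra j i) = some l ∧
      ∀ w ∈ l, len w < len (ra j w) := by
  rw [rG]
  by_cases h : len (ra j i) < len i
  · have h1 : Nat.blt (len (ra j i)) (len i) = true := by rw [Nat.blt_eq]; exact h
    rw [h1, cond_true, Option.filter_eq_some_iff]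
    simp only [List.all_eq_true, Nat.blt_eq, h, true_and]
  · have h1 : Nat.blt (len (ra j i)) (len i) = false := by
      rw [Bool.eq_false_iff, Ne, Nat.blt_eq]; exact h
    rw [h1, cond_false]
    simp [h]

theorem F_zero : F 0 = some [0] := by decide +kernel

theorem toS_zero : toS cs [0] = {(1 : W)} := by
  ext x
  simp [toS, e_zero]

include hS in
theorem condL (n : ℕ) (ih : ∀ i : Fin 48, len i ≤ n → fAux K n (e cs i) = (F i).map (toS cs))
    (i : Fin 48) (hi : len i ≤ n + 1) (j : Fin 3) (G : Set W) :
    (bruhatLT S (cs.simple j * e cs i) (e cs i) ∧ fAux K n (cs.simple j * e cs i) = some G ∧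
      upLeft S (cs.simple j) G = G) ↔ ∃ l, lG j i = some l ∧ G = toS cs l := by
  rw [bruhat_l' cs hS, mul_e]
  constructor
  · rintro ⟨h1, h2, h3⟩
    rw [ih _ (by omega), Option.map_eq_some_iff] at h2
    obtain ⟨l, h4, rfl⟩ := h2
    exact ⟨l, (lG_iff j i l).mpr ⟨h1, h4, (upL_iff cs hS j l).mp h3⟩, rfl⟩
  · rintro ⟨l, hl, rfl⟩
    obtain ⟨h1, h2, h3⟩ := (lG_iff j i l).mp hl
    exact ⟨h1, by rw [ih _ (by omega), h2]; rfl, (upL_iff cs hS j l).mpr h3⟩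

include hS in
theorem condR (n : ℕ) (ih : ∀ i : Fin 48, len i ≤ n → fAux K n (e cs i) = (F i).map (toS cs))
    (i : Fin 48) (hi : len i ≤ n + 1) (j : Fin 3) (G : Set W) :
    (bruhatLT S (e cs i * cs.simple j) (e cs i) ∧ fAux K n (e cs i * cs.simple j) = some G ∧
      upRight S (cs.simple j) G = G) ↔ ∃ l, rG j i = some l ∧ G = toS cs l := by
  rw [bruhat_r' cs hS, e_mul]
  constructor
  · rintro ⟨h1, h2, h3⟩
    rw [ih _ (by omega), Option.map_eq_some_iff] at h2
    obtain ⟨l, h4, rfl⟩ := h2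
    exact ⟨l, (rG_iff j i l).mpr ⟨h1, h4, (upR_iff cs hS j l).mp h3⟩, rfl⟩
  · rintro ⟨l, hl, rfl⟩
    obtain ⟨h1, h2, h3⟩ := (rG_iff j i l).mp hl
    exact ⟨h1, by rw [ih _ (by omega), h2]; rfl, (upR_iff cs hS j l).mpr h3⟩

include hS in
theorem fAux_eq (n : ℕ) : ∀ i : Fin 48, len i ≤ n → fAux K n (e cs i) = (F i).map (toS cs) := by
  induction n with
  | zero =>
    intro i hi
    rw [eq_zero_of_len i (by omega), fAux, e_zero, if_pos rfl, F_zero, Option.map_some, toS_zero]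
  | succ n ih =>
    intro i hi
    by_cases hi0 : i = 0
    · rw [hi0, fAux, e_zero, if_pos rfl, F_zero, Option.map_some, toS_zero]
    have hne : e cs i ≠ 1 := by
      rw [← e_zero cs]
      exact fun h => hi0 (e_inj cs h)
    have cL := condL cs hS K n ih i hi
    have cR := condR cs hS K n ih i hi
    have hmem : ∀ j, cs.simple j ∈ S := fun j => by rw [hS]; exact ⟨j, rfl⟩
    rw [fAux, if_neg hne]
    cases hF : F i with
    | none =>
      have hnone := (F_none i hi0).mpr hF
      rw [if_neg, Option.map_none]
      rintro (⟨s, hs, h1, G, h2⟩ | ⟨s, hs, h1, G, h2⟩)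
      · rw [hS] at hs
        obtain ⟨j, rfl⟩ := hs
        obtain ⟨l, hl, -⟩ := (cL j G).mp ⟨h1, h2⟩
        rw [(hnone j).1] at hl
        cases hl
      · rw [hS] at hs
        obtain ⟨j, rfl⟩ := hs
        obtain ⟨l, hl, -⟩ := (cR j G).mp ⟨h1, h2⟩
        rw [(hnone j).2] at hl
        cases hl
    | some l =>
      have hsome := F_some i hi0 l hF
      rw [if_pos, Option.map_some]
      · congr 1
        ext x
        obtain ⟨x, rfl⟩ := e_surj cs x
        rw [mem_toS, hsome, Set.mem_inter_iff]
        simp only [Set.mem_iInter, Set.mem_iUnion, exists_prop]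
        refine and_congr ⟨fun h j G hG => ?_, fun h s hs G hG => ?_⟩
          ⟨fun h j G hG => ?_, fun h s hs G hG => ?_⟩
        · obtain ⟨w, ⟨w, hw, rfl⟩, h1⟩ := h (cs.simple j) (hmem j) (toS cs G)
            ((cL j (toS cs G)).mpr ⟨G, hG, rfl⟩)
          rw [supp_L cs hS K j w (((lG_iff j i G).mp hG).2.2 w hw)] at h1
          exact ⟨w, hw, (mem_toS cs _ _).mp h1⟩
        · rw [hS] at hs
          obtain ⟨j, rfl⟩ := hs
          obtain ⟨m, hm, rfl⟩ := (cL j G).mp hG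
          obtain ⟨w, hw, h1⟩ := h j m hm
          refine ⟨e cs w, ⟨w, hw, rfl⟩, ?_⟩
          rw [supp_L cs hS K j w (((lG_iff j i m).mp hm).2.2 w hw)]
          exact ⟨x, h1, rfl⟩
        · obtain ⟨w, ⟨w, hw, rfl⟩, h1⟩ := h (cs.simple j) (hmem j) (toS cs G)
            ((cR j (toS cs G)).mpr ⟨G, hG, rfl⟩)
          rw [supp_R cs hS K j w (((rG_iff j i G).mp hG).2.2 w hw)] at h1
          exact ⟨w, hw, (mem_toS cs _ _).mp h1⟩
        · rw [hS] at hs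
          obtain ⟨j, rfl⟩ := hs
          obtain ⟨m, hm, rfl⟩ := (cR j G).mp hG
          obtain ⟨w, hw, h1⟩ := h j m hm
          refine ⟨e cs w, ⟨w, hw, rfl⟩, ?_⟩
          rw [supp_R cs hS K j w (((rG_iff j i m).mp hm).2.2 w hw)]
          exact ⟨x, h1, rfl⟩
      · by_contra hcon
        have hn : F i = none := by
          rw [← F_none i hi0]
          intro j
          constructor
          · rw [Option.eq_none_iff_forall_ne_some]
            intro m hm
            have h1 := (cL j _).mpr ⟨m, hm, rfl⟩
            exact hcon (Or.inl ⟨_, hmem j, h1.1, _, h1.2⟩)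
          · rw [Option.eq_none_iff_forall_ne_some]
            intro m hm
            have h1 := (cR j _).mpr ⟨m, hm, rfl⟩
            exact hcon (Or.inr ⟨_, hmem j, h1.1, _, h1.2⟩)
        rw [hn] at hF
        cases hF

include hS in
theorem fW_eq (i : Fin 48) : fW K (e cs i) = (F i).map (toS cs) := by
  rw [fW, wl cs hS]
  exact fAux_eq cs hS K _ i le_rfl

include hS in
theorem fW_none (i : Fin 48) : fW K (e cs i) = none ↔ F i = none := by
  rw [fW_eq cs hS, Option.map_eq_none_iff]

/-- The list test for non-separatedness. -/
def nonSep (i : Fin 48) : Bool :=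
  (F i).any (fun l => !(l.contains i && l.all (fun y => Nat.beq y.val i.val)))

include hS in
theorem nonSep_iff (i : Fin 48) :
    ((∃ G : Set W, fW K (e cs i) = some G) ∧ ¬ Separated K (e cs i)) ↔ nonSep i = true := by
  rw [Separated, fW_eq cs hS, nonSep]
  cases F i with
  | none => simp
  | some l =>
    simp only [Option.map_some, Option.some.injEq, exists_eq', true_and, Option.any_some,
      Bool.not_eq_true', ← Bool.not_eq_true, Bool.and_eq_true, List.all_eq_true, Nat.beq_eq,
      List.contains_iff_mem]
    apply not_congr
    constructor
    · intro h
      refine ⟨?_, fun y hy => ?_⟩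
      · rw [← mem_toS cs, h]; rfl
      · rw [← mem_toS cs, h] at hy
        rw [e_inj cs hy]
    · rintro ⟨h1, h2⟩
      ext x
      obtain ⟨x, rfl⟩ := e_surj cs x
      rw [mem_toS, Set.mem_singleton_iff, (e_inj cs).eq_iff]
      exact ⟨fun h => Fin.ext (h2 x h), fun h => h ▸ h1⟩

theorem F_none_iff : ∀ i : Fin 48, F i = none ↔ i = 32 := by decide +kernel

/-- The indices of the non-separated elements, in the order of the statement. -/
def nsList : List (Fin 48) :=
  [15, 13, 23, 21, 31, 28, 19, 29, 38, 36, 43, 17, 24, 35, 41, 42, 46, 25, 45, 44]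

theorem nonSep_mem : ∀ i : Fin 48, nonSep i = true ↔ i ∈ nsList := by decide +kernel

theorem nsList_nodup : nsList.Nodup := by decide +kernel

include hS in
theorem nonSep_set : {x : W | (∃ G : Set W, fW K x = some G) ∧ ¬ Separated K x} =
    e cs '' (nsList.toFinset : Set (Fin 48)) := by
  ext x
  obtain ⟨i, rfl⟩ := e_surj cs x
  rw [Set.mem_ofPred_eq, nonSep_iff cs hS, nonSep_mem, (e_inj cs).mem_set_image]
  simp

theorem word_e' (l : List (Fin 3)) (k : Fin 48) (h : l.foldl (fun a j => ra j a) 0 = k) :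
    e cs k = (l.map cs.simple).prod := by rw [word_e, h]

end hecke

end B3

open KLPaper in
theorem statement_5 (W : Type*) [Group W]
    (cs : CoxeterSystem (CoxeterMatrix.Bₙ 3) W)
    (s t u : W) (hs : s = cs.simple 0) (ht : t = cs.simple 1) (hu : u = cs.simple 2)
    (S : Set W) (hS : S = {s, t, u}) (K : KLData S) :
    {x : W | fW K x = none} = {s * t * s * u * t * s} ∧
    {x : W | (∃ F : Set W, fW K x = some F) ∧ ¬ Separated K x} =
      ({u * t * u, t * u * t, u * t * s * u, t * u * t * s, u * t * s * u * t,
        t * s * u * t * s, s * u * t * u, t * s * u * t * u, u * t * s * u * t * u,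
        (t * s * u) ^ 2, t * u * t * s * u * t * u, s * t * u * t, s * t * s * u * t,
        (s * u * t) ^ 2, s * u * t * s * u * t * u, t * s * u * t * s * u * t,
        t * s * u * t * s * u * t * u, s * t * u * t * s, s * t * u * t * s * u * t * u,
        s * t * s * u * t * s * u * t} : Set W) ∧
    Set.ncard {x : W | (∃ F : Set W, fW K x = some F) ∧ ¬ Separated K x} = 20 := by
  change CoxeterSystem (CoxeterMatrix.B 3) W at cs
  have hS' : S = Set.range cs.simple := by
    rw [hS, hs, ht, hu]
    ext x
    simp only [Set.mem_insert_iff, Set.mem_singleton_iff, Set.mem_range]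
    constructor
    · rintro (h | h | h)
      · exact ⟨0, h.symm⟩
      · exact ⟨1, h.symm⟩
      · exact ⟨2, h.symm⟩
    · rintro ⟨j, rfl⟩
      fin_cases j
      · exact Or.inl rfl
      · exact Or.inr (Or.inl rfl)
      · exact Or.inr (Or.inr rfl)
  have hs' : cs.simple (0 : Fin 3) = s := hs.symm
  have ht' : cs.simple (1 : Fin 3) = t := ht.symm
  have hu' : cs.simple (2 : Fin 3) = u := hu.symm
  refine ⟨?_, ?_, ?_⟩
  · have h32 : s * t * s * u * t * s = B3.e cs 32 := by
      rw [B3.word_e' cs [0, 1, 0, 2, 1, 0] 32 (by decide +kernel)]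
      simp [mul_assoc, hs', ht', hu']
    rw [h32]
    ext x
    obtain ⟨i, rfl⟩ := B3.e_surj cs x
    rw [Set.mem_ofPred_eq, B3.fW_none cs hS', Set.mem_singleton_iff, (B3.e_inj cs).eq_iff]
    exact B3.F_none_iff i
  · rw [B3.nonSep_set cs hS' K]
    have hset : B3.e cs '' (B3.nsList.toFinset : Set (Fin 48)) =
        {x | x ∈ B3.nsList.map (B3.e cs)} := by
      ext x
      simp
    rw [hset]
    have hlist : B3.nsList.map (B3.e cs) =
      [u * t * u, t * u * t, u * t * s * u, t * u * t * s, u * t * s * u * t,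
        t * s * u * t * s, s * u * t * u, t * s * u * t * u, u * t * s * u * t * u,
        (t * s * u) ^ 2, t * u * t * s * u * t * u, s * t * u * t, s * t * s * u * t,
        (s * u * t) ^ 2, s * u * t * s * u * t * u, t * s * u * t * s * u * t,
        t * s * u * t * s * u * t * u, s * t * u * t * s, s * t * u * t * s * u * t * u,
        s * t * s * u * t * s * u * t] := by
      simp only [B3.nsList, List.map_cons, List.map_nil]
      rw [B3.word_e' cs [2, 1, 2] 15 (by decide +kernel),
        B3.word_e' cs [1, 2, 1] 13 (by decide +kernel),
        B3.word_e' cs [2, 1, 0, 2] 23 (by decide +kernel),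
        B3.word_e' cs [1, 2, 1, 0] 21 (by decide +kernel),
        B3.word_e' cs [2, 1, 0, 2, 1] 31 (by decide +kernel),
        B3.word_e' cs [1, 0, 2, 1, 0] 28 (by decide +kernel),
        B3.word_e' cs [0, 2, 1, 2] 19 (by decide +kernel),
        B3.word_e' cs [1, 0, 2, 1, 2] 29 (by decide +kernel),
        B3.word_e' cs [2, 1, 0, 2, 1, 2] 38 (by decide +kernel),
        B3.word_e' cs [1, 0, 2, 1, 0, 2] 36 (by decide +kernel),
        B3.word_e' cs [1, 2, 1, 0, 2, 1, 2] 43 (by decide +kernel),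
        B3.word_e' cs [0, 1, 2, 1] 17 (by decide +kernel),
        B3.word_e' cs [0, 1, 0, 2, 1] 24 (by decide +kernel),
        B3.word_e' cs [0, 2, 1, 0, 2, 1] 35 (by decide +kernel),
        B3.word_e' cs [0, 2, 1, 0, 2, 1, 2] 41 (by decide +kernel),
        B3.word_e' cs [1, 0, 2, 1, 0, 2, 1] 42 (by decide +kernel),
        B3.word_e' cs [1, 0, 2, 1, 0, 2, 1, 2] 46 (by decide +kernel),
        B3.word_e' cs [0, 1, 2, 1, 0] 25 (by decide +kernel),
        B3.word_e' cs [0, 1, 2, 1, 0, 2, 1, 2] 45 (by decide +kernel),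
        B3.word_e' cs [0, 1, 0, 2, 1, 0, 2, 1] 44 (by decide +kernel)]
      simp [mul_assoc, pow_two, hs', ht', hu']
    rw [hlist]
    ext x
    simp only [Set.mem_ofPred_eq, List.mem_cons, List.not_mem_nil, or_false,
      Set.mem_insert_iff, Set.mem_singleton_iff]
  · rw [B3.nonSep_set cs hS' K, Set.ncard_image_of_injective _ (B3.e_inj cs),
      Set.ncard_coe_finset, List.toFinset_card_of_nodup B3.nsList_nodup]
    rfl
end
end

section
/- In the symmetric group S₈, let 𝐚 = (3,2,1,5,4,3,2,6,5,4,3,7,6,5) and let y be the permutation with one-line notation 14327658, so that y = s₂s₃s₂s₅s₆s₅. For ε ∈ {0,1}¹⁴, the product s_{a₁}^{ε(1)} s_{a₂}^{ε(2)} ⋯ s_{a₁₄}^{ε(14)} equals y if and only if ε ∈ { λ_i + μ_j : 1 ≤ i, j ≤ 5 } ∪ { λ_i + μ_j + ν : i, j ∈ {4,5} }, where (with δ_k the k-th standard basis vector of {0,1}¹⁴ and + the coordinatewise sum, which in all listed cases involves vectors of pairwise disjoint support): λ₁ = δ₁+δ₂+δ₆, λ₂ = δ₂+δ₆+δ₇,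 λ₃ = δ₆+δ₇+δ₁₁, λ₄ = δ₇+δ₁₁+δ₁, λ₅ = δ₁₁+δ₁+δ₂, μ₁ = δ₄+δ₈+δ₉, μ₂ = δ₈+δ₉+δ₁₃, μ₃ = δ₉+δ₁₃+δ₁₄, μ₄ = δ₁₃+δ₁₄+δ₄, μ₅ = δ₁₄+δ₄+δ₈, ν = δ₅+δ₁₀. In particular there are exactly 29 such ε. -/
/-- The symmetric group `S₈`, the Weyl group of type `A₇`. -/
abbrev W8 := Equiv.Perm (Fin 8)

/-- The adjacent transposition `sᵢ₊₁ = (i+1, i+2)` (so `sgen i` is `s_{i+1}` in 1-based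
notation). -/
def sgen (i : Fin 7) : W8 := Equiv.swap i.castSucc i.succ

/-- The set of simple reflections (adjacent transpositions) of `S₈`. -/
def SA7 : Set W8 := {σ | ∃ i : Fin 7, σ = sgen i}

/-- The permutation `y = 14327658` (one-line notation). -/
def y8 : W8 :=
  ⟨![0, 3, 2, 1, 6, 5, 4, 7], ![0, 3, 2, 1, 6, 5, 4, 7],
    by intro x; fin_cases x <;> rfl, by intro x; fin_cases x <;> rfl⟩

/-- The word `𝐚 = (3,2,1,5,4,3,2,6,5,4,3,7,6,5)` (in `1`-based indexing), recorded here
as the `0`-based indices of the corresponding adjacent transpositions. -/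
def aword : Fin 14 → Fin 7 := ![2, 1, 0, 4, 3, 2, 1, 5, 4, 3, 2, 6, 5, 4]

/-- The subword product `s_{a₁}^{ε(1)} ⋯ s_{a₁₄}^{ε(14)}` associated to `ε ∈ {0,1}¹⁴`. -/
def subwordProd (ε : Fin 14 → ZMod 2) : W8 :=
  ((List.finRange 14).map fun k => sgen (aword k) ^ (ε k).val).prod

/-- The `k`-th standard basis vector `δ_{k+1}` of `{0,1}¹⁴` (`0`-based index `k`). -/
def dd (k : Fin 14) : Fin 14 → ZMod 2 := fun i => if i = k then 1 else 0

/-- The vectors `λ₁, …, λ₅`. -/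
def lam : Fin 5 → (Fin 14 → ZMod 2) :=
  ![dd 0 + dd 1 + dd 5, dd 1 + dd 5 + dd 6, dd 5 + dd 6 + dd 10,
    dd 6 + dd 10 + dd 0, dd 10 + dd 0 + dd 1]

/-- The vectors `μ₁, …, μ₅`. -/
def mu : Fin 5 → (Fin 14 → ZMod 2) :=
  ![dd 3 + dd 7 + dd 8, dd 7 + dd 8 + dd 12, dd 8 + dd 12 + dd 13,
    dd 12 + dd 13 + dd 3, dd 13 + dd 3 + dd 7]

/-- The vector `ν = δ₅ + δ₁₀`. -/
def nu : Fin 14 → ZMod 2 := dd 4 + dd 9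

/-- Swap the entries in positions `n`, `n+1` of a list. -/
def swapAt : ℕ → List ℕ → List ℕ
  | 0, a :: b :: l => b :: a :: l
  | n + 1, a :: l => a :: swapAt n l
  | _, l => l

/-- One-line notation (zero-based). -/
def oneLine (w : W8) : List ℕ :=
  [(w 0).val, (w 1).val, (w 2).val, (w 3).val, (w 4).val, (w 5).val, (w 6).val, (w 7).val]

/-- Equality test for lists of naturals. -/
def eqList : List ℕ → List ℕ → Bool
  | [], [] => true
  | a :: l, b :: m => Nat.beq a b && eqList l m
  | _, _ => false

theorem eqList_iff (l m : List ℕ) : eqList l m = true ↔ l = m := by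
  induction l generalizing m with
  | nil => cases m <;> simp [eqList]
  | cons a l ih => cases m <;> simp [eqList, ih]

/-- All exponent lists for which the subword product, started at `cur`, ends at `y8`. -/
def sols : List ℕ → List ℕ → List (List (ZMod 2))
  | [], cur => bif eqList cur [0, 3, 2, 1, 6, 5, 4, 7] then [[]] else []
  | a :: w, cur => (sols w cur).map (List.cons 0) ++ (sols w (swapAt a cur)).map (List.cons 1)

theorem oneLine_mul (w : W8) (i : Fin 7) :
    oneLine (w * sgen i) = swapAt i.val (oneLine w) := by
  have key : ∀ i : Fin 7, ∀ k : Fin 8, sgen i k =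
      if k = i.castSucc then i.succ else if k = i.succ then i.castSucc else k := by
    intro i k
    rfl
  fin_cases i <;> simp [oneLine, swapAt, key, Fin.ext_iff]

theorem oneLine_eq (w : W8) : oneLine w = [0, 3, 2, 1, 6, 5, 4, 7] ↔ w = y8 := by
  constructor
  · intro h
    simp only [oneLine, List.cons.injEq, and_true] at h
    obtain ⟨h0, h1, h2, h3, h4, h5, h6, h7⟩ := h
    ext k
    fin_cases k
    exacts [h0, h1, h2, h3, h4, h5, h6, h7]
  · rintro rfl
    rfl

theorem mem_sols (ε : Fin 14 → ZMod 2) (ks : List (Fin 14)) (w : W8) :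
    w * (ks.map fun k => sgen (aword k) ^ (ε k).val).prod = y8 ↔
      ks.map ε ∈ sols (ks.map fun k => (aword k).val) (oneLine w) := by
  induction ks generalizing w with
  | nil =>
    simp only [List.map_nil, List.prod_nil, mul_one, sols]
    rw [← oneLine_eq, ← eqList_iff]
    cases eqList (oneLine w) [0, 3, 2, 1, 6, 5, 4, 7] <;> simp
  | cons k ks ih =>
    simp only [List.map_cons, List.prod_cons, sols, ← mul_assoc]
    rw [ih, List.mem_append, List.mem_map, List.mem_map]
    have h01 : ε k = 0 ∨ ε k = 1 := by
      generalize ε k = e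
      revert e
      decide
    have hv : (1 : ZMod 2).val = 1 := rfl
    rcases h01 with h | h
    · simp [h]
    · simp [h, hv, oneLine_mul]

/-- One-line notation of `y8`. -/
def target : List ℕ := [0, 3, 2, 1, 6, 5, 4, 7]

theorem take_swapAt (p a : ℕ) (l : List ℕ) (h : p ≤ a) : (swapAt a l).take p = l.take p := by
  induction a generalizing p l with
  | zero =>
    obtain rfl : p = 0 := by omega
    simp
  | succ a ih =>
    cases l with
    | nil => simp [swapAt]
    | cons x l =>
      cases p with
      | zero => simp
      | succ p => simp [swapAt, ih p l (by omega)]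

theorem sols_dead (p : ℕ) (w cur : List ℕ) (hw : ∀ a ∈ w, p ≤ a)
    (hc : cur.take p ≠ target.take p) : sols w cur = [] := by
  induction w generalizing cur with
  | nil =>
    have h : eqList cur [0, 3, 2, 1, 6, 5, 4, 7] = false := by
      rw [Bool.eq_false_iff, ne_eq, eqList_iff]
      rintro rfl
      exact hc rfl
    simp [sols, h]
  | cons a w ih =>
    have hw' : ∀ b ∈ w, p ≤ b := fun b hb => hw b (List.mem_cons_of_mem _ hb)
    have ha : p ≤ a := hw a List.mem_cons_self
    simp [sols, ih cur hw' hc, ih (swapAt a cur) hw' (by rwa [take_swapAt p a cur ha])]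

/-- Same as `sols`, but branches whose settled initial entries are wrong are cut off.
Each letter comes with the number of initial entries to be compared. -/
def psols : List (ℕ × ℕ) → List ℕ → List (List (ZMod 2))
  | [], cur => bif eqList cur [0, 3, 2, 1, 6, 5, 4, 7] then [[]] else []
  | (a, p) :: w, cur => bif eqList (cur.take p) (target.take p) then
      (psols w cur).map (List.cons 0) ++ (psols w (swapAt a cur)).map (List.cons 1) else []

/-- Every letter of the word is at least its own bound and the bounds of the letters before. -/
def Good : List (ℕ × ℕ) → Prop
  | [] => True
  | (a, p) :: w => p ≤ a ∧ (∀ b ∈ w.map Prod.fst, p ≤ b) ∧ Good w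

theorem psols_eq (w : List (ℕ × ℕ)) (cur : List ℕ) (hw : Good w) :
    psols w cur = sols (w.map Prod.fst) cur := by
  induction w generalizing cur with
  | nil => rfl
  | cons x w ih =>
    obtain ⟨a, p⟩ := x
    obtain ⟨h1, h2, h3⟩ := hw
    rw [psols, ih _ h3, ih _ h3]
    cases h : eqList (cur.take p) (target.take p) with
    | true => rfl
    | false =>
      symm
      apply sols_dead p
      · intro b hb
        rcases List.mem_cons.1 hb with rfl | hb
        · exact h1
        · exact h2 b hb
      · rw [Bool.eq_false_iff, ne_eq, eqList_iff] at h
        exact h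

/-- The word with pruning bounds. -/
def pword : List (ℕ × ℕ) :=
  [(2, 0), (1, 0), (0, 0), (4, 1), (3, 1), (2, 1), (1, 1), (5, 2), (4, 2), (3, 2), (2, 2),
    (6, 4), (5, 4), (4, 4)]

theorem pword_good : Good pword := by
  simp [Good, pword]

/-- The solution list. -/
def solList : List (List (ZMod 2)) := psols pword [0, 1, 2, 3, 4, 5, 6, 7]

theorem mem_solList (ε : Fin 14 → ZMod 2) :
    subwordProd ε = y8 ↔ (List.finRange 14).map ε ∈ solList := by
  have h := mem_sols ε (List.finRange 14) 1
  rw [one_mul] at h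
  rw [solList, psols_eq _ _ pword_good]
  exact h

/-- The solutions given in the theorem. -/
def expected : List (Fin 14 → ZMod 2) :=
  ((List.finRange 5).flatMap fun i => (List.finRange 5).map fun j => lam i + mu j) ++
    [lam 3 + mu 3 + nu, lam 3 + mu 4 + nu, lam 4 + mu 3 + nu, lam 4 + mu 4 + nu]

set_option maxRecDepth 100000 in
theorem solList_perm :
    (∀ l ∈ solList, l ∈ expected.map (fun ε => (List.finRange 14).map ε)) ∧
    (∀ l ∈ expected.map (fun ε => (List.finRange 14).map ε), l ∈ solList) := by
  decide +kernel

theorem expected_nodup : expected.Nodup := by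
  decide +kernel

theorem mem_expected (ε : Fin 14 → ZMod 2) : subwordProd ε = y8 ↔ ε ∈ expected := by
  rw [mem_solList]
  constructor
  · intro h
    obtain ⟨ε', h', he⟩ := List.mem_map.1 (solList_perm.1 _ h)
    have : ε' = ε := by
      funext k
      exact List.map_inj_left.1 he k (List.mem_finRange k)
    exact this ▸ h'
  · intro h
    exact solList_perm.2 _ (List.mem_map.2 ⟨ε, h, rfl⟩)

theorem statement_14 :
    y8 = sgen 1 * sgen 2 * sgen 1 * sgen 4 * sgen 5 * sgen 4 ∧
    (∀ ε : Fin 14 → ZMod 2, subwordProd ε = y8 ↔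
      (∃ i j : Fin 5, ε = lam i + mu j) ∨
      (∃ i j : Fin 5, (i = 3 ∨ i = 4) ∧ (j = 3 ∨ j = 4) ∧ ε = lam i + mu j + nu)) ∧
    Set.ncard {ε : Fin 14 → ZMod 2 | subwordProd ε = y8} = 29 := by
  refine ⟨?_, ?_, ?_⟩
  · decide +kernel
  · intro ε
    rw [mem_expected]
    constructor
    · intro h
      simp only [expected, List.mem_append, List.mem_flatMap, List.mem_map, List.mem_finRange,
        true_and, List.mem_cons, List.not_mem_nil, or_false] at h
      rcases h with ⟨i, j, h⟩ | h | h | h | h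
      · exact Or.inl ⟨i, j, h.symm⟩
      · exact Or.inr ⟨3, 3, by simp, by simp, h⟩
      · exact Or.inr ⟨3, 4, by simp, by simp, h⟩
      · exact Or.inr ⟨4, 3, by simp, by simp, h⟩
      · exact Or.inr ⟨4, 4, by simp, by simp, h⟩
    · rintro (⟨i, j, rfl⟩ | ⟨i, j, rfl | rfl, rfl | rfl, rfl⟩)
      · exact List.mem_append_left _ (List.mem_flatMap.2
          ⟨i, List.mem_finRange i, List.mem_map.2 ⟨j, List.mem_finRange j, rfl⟩⟩)
      all_goals
        apply List.mem_append_right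
        simp
  · have hs : {ε : Fin 14 → ZMod 2 | subwordProd ε = y8} = (expected.toFinset : Set _) := by
      ext ε
      simp [mem_expected]
    rw [hs, Set.ncard_coe_finset, List.toFinset_card_of_nodup expected_nodup]
    rfl
end
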